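/- arXiv:1509.05878 — 4 statements merged into one kernel-verified Lean document; each statement's English description precedes it below -/
import Mathlib

section
/- Let M ∈ ℕ₀ and 0 ≤ κ < 1, and let P be a point set in [0,1)² with N = 2^{M+κ} points. Suppose j = (j₁,j₂) ∈ ℕ₀² with |j| = M and m ∈ 𝔻_j are such that I_{j,m} contains exactly one point p of P. Let j' = (j₁+1,j₂) and j'' = (j₁,j₂+1), and let m' ∈ 𝔻_{j'} and m'' ∈ 𝔻_{j''} be the unique indices with p ∈ I_{j',m'} ⊂ I_{j,m} and p ∈ I_{j'',m''} ⊂ I_{j,m}. Then ρ_{j,m} := μ_{j,m}² + μ_{j',m'}² + μ_{j'',m''}² satisfies 2^{2M}·ρ_{j,m} ≥ γ(κ). -/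
open MeasureTheory

noncomputable section

/-- The half-open unit square `[0,1) × [0,1)` in `ℝ × ℝ`. -/
def unitSq : Set (ℝ × ℝ) := Set.Ico (0:ℝ) 1 ×ˢ Set.Ico (0:ℝ) 1

/-- The discrepancy function of the point configuration `p`. -/
def disc (N : ℕ) (p : Fin N → ℝ × ℝ) (x : ℝ × ℝ) : ℝ :=
  (∑ i : Fin N, if 0 ≤ (p i).1 ∧ (p i).1 < x.1 ∧ 0 ≤ (p i).2 ∧ (p i).2 < x.2
    then (1:ℝ) else 0) - N * x.1 * x.2

/-- The dyadic interval `I_{j,m}`. -/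
def dyadic (j m : ℕ × ℕ) : Set (ℝ × ℝ) :=
  Set.Ico ((m.1:ℝ)/2^j.1) (((m.1:ℝ)+1)/2^j.1) ×ˢ
    Set.Ico ((m.2:ℝ)/2^j.2) (((m.2:ℝ)+1)/2^j.2)

/-- The one-dimensional Haar function adapted to `[m/2^j, (m+1)/2^j)`. -/
def haar1 (j m : ℕ) (t : ℝ) : ℝ :=
  if (m:ℝ)/2^j ≤ t ∧ t < (2*(m:ℝ)+1)/2^(j+1) then 1
  else if (2*(m:ℝ)+1)/2^(j+1) ≤ t ∧ t < ((m:ℝ)+1)/2^j then -1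
  else 0

/-- The two-dimensional Haar function `h_{j,m}`. -/
def haar (j m : ℕ × ℕ) (x : ℝ × ℝ) : ℝ := haar1 j.1 m.1 x.1 * haar1 j.2 m.2 x.2

/-- `g_κ(α,β) = (αβ − 2^{κ-2})² + (α(1−β) − 2^{κ-4})² + ((1−α)β − 2^{κ-4})²`. -/
def gk (κ α β : ℝ) : ℝ :=
  (α * β - (2:ℝ) ^ (κ - 2)) ^ 2 + (α * (1 - β) - (2:ℝ) ^ (κ - 4)) ^ 2 +
    ((1 - α) * β - (2:ℝ) ^ (κ - 4)) ^ 2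

/-- `h(κ) = inf { g_κ(α,β) : 1/2 ≤ α < 1, 1/2 ≤ β < 1 }`. -/
def hfun (κ : ℝ) : ℝ :=
  sInf { t : ℝ | ∃ α β : ℝ, 1/2 ≤ α ∧ α < 1 ∧ 1/2 ≤ β ∧ β < 1 ∧ t = gk κ α β }

/-- `γ(κ) = min(9·2^{2κ-13}, 2^{-4}·h(κ))`. -/
def gam (κ : ℝ) : ℝ := min (9 * (2:ℝ) ^ (2 * κ - 13)) ((2:ℝ) ^ (-4 : ℝ) * hfun κ)

/-!
Integrating the Haar function in one variable produces the tent function over the same dyadic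
interval. Hence `μ_{j,m} = 2^{-|j|-2} (αβ - 2^{-|j|-2} N)`, where `α, β ∈ [0, 1]` are the tent
heights at the coordinates of the only point `p` in `I_{j,m}`. Passing to the dyadic child
containing `p` replaces the height `α` by `2 min(α, 1 - α)`. So with `N = 2^{|j|+κ}` the three
coefficients become `2^{-|j|-2}` times `αβ - 2^{κ-2}`, `min(α, 1-α) β - 2^{κ-4}` and
`α min(β, 1-β) - 2^{κ-4}`. If `α, β ≥ 1/2`, the sum of the squares of these numbers is `g_κ(α, β)`;
if, say, `α ≤ 1/2`, then the first two are `x - 2^{κ-2}` and `x - 2^{κ-4}` with the same `x = αβ`,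
and two numbers at distance `3·2^{κ-4}` have squares adding up to at least half the square of that
distance.
-/

section DyadicIntervals

/-- The one-dimensional dyadic interval `[m/2^j, (m+1)/2^j)`, so that `dyadic j m` is by
definition `dyadicIco j.1 m.1 ×ˢ dyadicIco j.2 m.2`. -/
def dyadicIco (j m : ℕ) : Set ℝ := Set.Ico ((m : ℝ) / 2 ^ j) (((m : ℝ) + 1) / 2 ^ j)

variable {j m : ℕ} {t : ℝ}

lemma mem_dyadicIco : t ∈ dyadicIco j m ↔ (m : ℝ) ≤ 2 ^ j * t ∧ 2 ^ j * t < m + 1 := by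
  have hpow : (0 : ℝ) < 2 ^ j := by positivity
  rw [dyadicIco, Set.mem_Ico, div_le_iff₀' hpow, lt_div_iff₀' hpow]

lemma nonneg_of_mem_dyadicIco (ht : t ∈ dyadicIco j m) : 0 ≤ t :=
  le_trans (by positivity) ht.1

lemma mem_dyadicIco_iff_floor (ht : 0 ≤ t) : t ∈ dyadicIco j m ↔ ⌊2 ^ j * t⌋₊ = m := by
  rw [mem_dyadicIco, Nat.floor_eq_iff (by positivity)]

lemma floor_of_mem_dyadicIco (ht : t ∈ dyadicIco j m) : ⌊2 ^ j * t⌋₊ = m :=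
  (mem_dyadicIco_iff_floor (nonneg_of_mem_dyadicIco ht)).1 ht

lemma dyadicIco_index_unique {n : ℕ} (hm : t ∈ dyadicIco j m) (hn : t ∈ dyadicIco j n) : m = n :=
  (floor_of_mem_dyadicIco hm).symm.trans (floor_of_mem_dyadicIco hn)

lemma dyadicIco_succ_subset (j m : ℕ) : dyadicIco (j + 1) m ⊆ dyadicIco j (m / 2) := by
  intro t ht
  rw [mem_dyadicIco_iff_floor (nonneg_of_mem_dyadicIco ht), ← floor_of_mem_dyadicIco ht,
    ← Nat.floor_div_ofNat]
  congr 1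
  ring

lemma dyadicIco_succ_subset_of_mem {n : ℕ} (hm : t ∈ dyadicIco j m)
    (hn : t ∈ dyadicIco (j + 1) n) : dyadicIco (j + 1) n ⊆ dyadicIco j m :=
  dyadicIco_index_unique (dyadicIco_succ_subset j n hn) hm ▸ dyadicIco_succ_subset j n

lemma index_lt_of_mem_dyadicIco (ht : t ∈ dyadicIco j m) (ht1 : t < 1) : m < 2 ^ j := by
  have h : (m : ℝ) < 2 ^ j :=
    (mem_dyadicIco.1 ht).1.trans_lt (mul_lt_of_lt_one_right (by positivity) ht1)
  exact_mod_cast h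

lemma dyadicIco_subset_Ico (hm : m < 2 ^ j) : dyadicIco j m ⊆ Set.Ico 0 1 := by
  have h : (m : ℝ) + 1 ≤ 2 ^ j := by exact_mod_cast hm
  exact Set.Ico_subset_Ico (by positivity) (div_le_one_of_le₀ h (by positivity))

lemma dyadic_left_eq (j m : ℕ) :
    (m : ℝ) / 2 ^ j = (2 * (m : ℝ) + 1) / 2 ^ (j + 1) - 1 / 2 ^ (j + 1) := by
  rw [pow_succ]; field_simp; ring

lemma dyadic_right_eq (j m : ℕ) :
    ((m : ℝ) + 1) / 2 ^ j = (2 * (m : ℝ) + 1) / 2 ^ (j + 1) + 1 / 2 ^ (j + 1) := by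
  rw [pow_succ]; field_simp; ring

lemma dyadic_left_lt_mid (j m : ℕ) : (m : ℝ) / 2 ^ j < (2 * (m : ℝ) + 1) / 2 ^ (j + 1) := by
  rw [dyadic_left_eq]; exact sub_lt_self _ (by positivity)

lemma dyadic_mid_lt_right (j m : ℕ) :
    (2 * (m : ℝ) + 1) / 2 ^ (j + 1) < ((m : ℝ) + 1) / 2 ^ j := by
  rw [dyadic_right_eq]; exact lt_add_of_pos_right _ (by positivity)

end DyadicIntervals

section Tent

/-- The tent function of height `1` over the dyadic interval `[m/2^j, (m+1)/2^j)`, extended by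
`0`. Up to the factor `2^{-j-1}` it is the primitive of `haar1 j m`. -/
def tent (j m : ℕ) (t : ℝ) : ℝ := max 0 (1 - |2 ^ (j + 1) * t - (2 * m + 1)|)

variable {j m : ℕ} {t : ℝ}

lemma tent_mem_Icc (j m : ℕ) (t : ℝ) : tent j m t ∈ Set.Icc (0 : ℝ) 1 :=
  ⟨le_max_left _ _, max_le zero_le_one (sub_le_self _ (abs_nonneg _))⟩

lemma tent_eq_zero_of_notMem (ht : t ∉ dyadicIco j m) : tent j m t = 0 := by
  rw [mem_dyadicIco] at ht
  rw [tent, pow_succ]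
  grind

lemma tent_div_two_pow (j m : ℕ) (t : ℝ) :
    tent j m t / 2 ^ (j + 1) =
      max 0 (1 / 2 ^ (j + 1) - |t - (2 * m + 1) / 2 ^ (j + 1)|) := by
  have hpow : (0 : ℝ) < 2 ^ (j + 1) := by positivity
  have hdist : |t - (2 * m + 1) / 2 ^ (j + 1)| =
      |2 ^ (j + 1) * t - (2 * m + 1)| / 2 ^ (j + 1) := by
    rw [← abs_of_pos hpow, ← abs_div, abs_of_pos hpow, sub_div, mul_div_cancel_left₀ _ hpow.ne']
  rw [hdist, ← sub_div, tent, ← max_div_div_right hpow.le, zero_div]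

/-- On the left child interval the parent's height is the relative distance to the child's left
end, on the right child to its right end; the child's tent is twice the smaller of the relative
distances to its two ends. -/
lemma tent_succ {n : ℕ} (hm : t ∈ dyadicIco j m) (hn : t ∈ dyadicIco (j + 1) n) :
    tent (j + 1) n t = 2 * min (tent j m t) (1 - tent j m t) := by
  have hdiv : n / 2 = m := dyadicIco_index_unique (dyadicIco_succ_subset j n hn) hm
  have hchild : n = 2 * m ∨ n = 2 * m + 1 := by omega
  rw [mem_dyadicIco] at hn
  rw [tent, tent, pow_succ _ (j + 1)]
  rcases hchild with rfl | rfl <;> push_cast at hn ⊢ <;> grind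

end Tent

section OneDimensional

variable {j m : ℕ} {s : Set ℝ}

lemma measurable_haar1 (j m : ℕ) : Measurable (haar1 j m) :=
  Measurable.ite measurableSet_Ico measurable_const
    (Measurable.ite measurableSet_Ico measurable_const measurable_const)

lemma abs_haar1_le_one (j m : ℕ) (t : ℝ) : |haar1 j m t| ≤ 1 := by
  unfold haar1; split_ifs <;> simp

lemma integrableOn_mul_haar1 {f : ℝ → ℝ} (hf : IntegrableOn f s) (j m : ℕ) :
    IntegrableOn (fun t => f t * haar1 j m t) s :=
  hf.mul_bdd (measurable_haar1 j m).aestronglyMeasurable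
    (Filter.Eventually.of_forall (abs_haar1_le_one j m))

lemma mul_haar1_eq_indicator_sub_indicator (f : ℝ → ℝ) (j m : ℕ) (t : ℝ) :
    f t * haar1 j m t =
      (Set.Ico ((m : ℝ) / 2 ^ j) ((2 * m + 1) / 2 ^ (j + 1))).indicator f t -
        (Set.Ico ((2 * (m : ℝ) + 1) / 2 ^ (j + 1)) ((m + 1) / 2 ^ j)).indicator f t := by
  simp only [haar1, Set.indicator, Set.mem_Ico]
  grind

lemma setIntegral_mul_haar1 {f : ℝ → ℝ} (hs : dyadicIco j m ⊆ s)
    (hf : IntegrableOn f (dyadicIco j m)) :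
    ∫ t in s, f t * haar1 j m t =
      (∫ t in (m / 2 ^ j : ℝ)..(2 * m + 1) / 2 ^ (j + 1), f t) -
        ∫ t in ((2 * m + 1) / 2 ^ (j + 1) : ℝ)..(m + 1) / 2 ^ j, f t := by
  have hl := (dyadic_left_lt_mid j m).le
  have hr := (dyadic_mid_lt_right j m).le
  have hL : Set.Ico ((m : ℝ) / 2 ^ j) ((2 * m + 1) / 2 ^ (j + 1)) ⊆ dyadicIco j m :=
    Set.Ico_subset_Ico_right hr
  have hR : Set.Ico ((2 * (m : ℝ) + 1) / 2 ^ (j + 1)) ((m + 1) / 2 ^ j) ⊆ dyadicIco j m :=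
    Set.Ico_subset_Ico_left hl
  simp_rw [mul_haar1_eq_indicator_sub_indicator]
  rw [integral_sub ((hf.mono_set hL).integrable_indicator measurableSet_Ico).integrableOn
      ((hf.mono_set hR).integrable_indicator measurableSet_Ico).integrableOn,
    setIntegral_indicator measurableSet_Ico, setIntegral_indicator measurableSet_Ico,
    Set.inter_eq_right.2 (hL.trans hs), Set.inter_eq_right.2 (hR.trans hs),
    integral_Ico_eq_integral_Ioc, integral_Ico_eq_integral_Ioc,
    intervalIntegral.integral_of_le hl, intervalIntegral.integral_of_le hr]

lemma setIntegral_id_mul_haar1 (hs : dyadicIco j m ⊆ s) :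
    ∫ t in s, t * haar1 j m t = -(1 / 2 ^ (j + 1)) ^ 2 := by
  rw [setIntegral_mul_haar1 (f := fun t => t) hs
      (continuous_id.integrableOn_Icc.mono_set Set.Ico_subset_Icc_self),
    integral_id, integral_id, dyadic_left_eq, dyadic_right_eq]
  ring

/-- The factor `χ_{[0,t)}(q)` of `χ_{B_x}(p)`, regarded as a function of the corner coordinate
`t`. -/
def cornerIndicator (q t : ℝ) : ℝ := (Set.Ico 0 t).indicator 1 q

lemma cornerIndicator_of_nonneg {q : ℝ} (hq : 0 ≤ q) :
    cornerIndicator q = (Set.Ioi q).indicator 1 := by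
  ext t
  simp [cornerIndicator, Set.indicator, hq]

lemma cornerIndicator_of_neg {q : ℝ} (hq : q < 0) : cornerIndicator q = 0 := by
  ext t
  simp [cornerIndicator, Set.indicator, hq.not_ge]

lemma integrableOn_cornerIndicator (q : ℝ) (hs : volume s ≠ ⊤) :
    IntegrableOn (cornerIndicator q) s := by
  rcases lt_or_ge q 0 with hq | hq
  · rw [cornerIndicator_of_neg hq]
    exact integrableOn_zero
  · rw [cornerIndicator_of_nonneg hq]
    exact (integrableOn_const hs).indicator measurableSet_Ioi

lemma intervalIntegral_indicator_Ioi {a b : ℝ} (q : ℝ) (hab : a ≤ b) :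
    ∫ t in a..b, (Set.Ioi q).indicator (1 : ℝ → ℝ) t = max (b - max a q) 0 := by
  rw [intervalIntegral.integral_of_le hab, setIntegral_indicator measurableSet_Ioi,
    Set.Ioc_inter_Ioi]
  simp

/-- The lengths of the parts of `[c - δ, c]` and `[c, c + δ]` to the right of `q` differ by a tent
in `q`. -/
lemma max_sub_max_sub_max_add_sub_max {δ : ℝ} (hδ : 0 ≤ δ) (c q : ℝ) :
    max (c - max (c - δ) q) 0 - max (c + δ - max c q) 0 = -max 0 (δ - |q - c|) := by
  grind

lemma setIntegral_cornerIndicator_mul_haar1 (q : ℝ) (hs : dyadicIco j m ⊆ s) :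
    ∫ t in s, cornerIndicator q t * haar1 j m t = -(tent j m q / 2 ^ (j + 1)) := by
  rcases lt_or_ge q 0 with hq | hq
  · have hmem : q ∉ dyadicIco j m := fun h => hq.not_ge (nonneg_of_mem_dyadicIco h)
    simp [cornerIndicator_of_neg hq, tent_eq_zero_of_notMem hmem]
  · rw [setIntegral_mul_haar1 hs (integrableOn_cornerIndicator q (by simp [dyadicIco])),
      cornerIndicator_of_nonneg hq,
      intervalIntegral_indicator_Ioi q (dyadic_left_lt_mid j m).le,
      intervalIntegral_indicator_Ioi q (dyadic_mid_lt_right j m).le,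
      dyadic_left_eq, dyadic_right_eq, tent_div_two_pow,
      max_sub_max_sub_max_add_sub_max (by positivity)]

end OneDimensional

section HaarCoefficients

/-- The Haar coefficient `μ_{j,m}` of the discrepancy function of `p`. -/
def haarCoeff (N : ℕ) (p : Fin N → ℝ × ℝ) (j m : ℕ × ℕ) : ℝ :=
  ∫ x in unitSq, disc N p x * haar j m x

variable {N : ℕ} {p : Fin N → ℝ × ℝ} {j m : ℕ × ℕ}

lemma mul_haar_eq_mul_haar1 (f g : ℝ → ℝ) (j m : ℕ × ℕ) (x : ℝ × ℝ) :
    f x.1 * g x.2 * haar j m x =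
      (f x.1 * haar1 j.1 m.1 x.1) * (g x.2 * haar1 j.2 m.2 x.2) :=
  mul_mul_mul_comm _ _ _ _

lemma integrableOn_unitSq_mul_haar {f g : ℝ → ℝ} (hf : IntegrableOn f (Set.Ico 0 1))
    (hg : IntegrableOn g (Set.Ico 0 1)) (j m : ℕ × ℕ) :
    IntegrableOn (fun x : ℝ × ℝ => f x.1 * g x.2 * haar j m x) unitSq := by
  simp_rw [mul_haar_eq_mul_haar1]
  rw [IntegrableOn, unitSq, Measure.volume_eq_prod, ← Measure.prod_restrict]
  exact (integrableOn_mul_haar1 hf j.1 m.1).mul_prod (integrableOn_mul_haar1 hg j.2 m.2)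

lemma setIntegral_unitSq_mul_haar (f g : ℝ → ℝ) (j m : ℕ × ℕ) :
    ∫ x in unitSq, f x.1 * g x.2 * haar j m x =
      (∫ t in Set.Ico 0 1, f t * haar1 j.1 m.1 t) *
        ∫ t in Set.Ico 0 1, g t * haar1 j.2 m.2 t := by
  simp_rw [mul_haar_eq_mul_haar1]
  exact setIntegral_prod_mul (fun t => f t * haar1 j.1 m.1 t) (fun t => g t * haar1 j.2 m.2 t) _ _

lemma disc_eq_sum_cornerIndicator (N : ℕ) (p : Fin N → ℝ × ℝ) (x : ℝ × ℝ) :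
    disc N p x =
      ∑ i, cornerIndicator (p i).1 x.1 * cornerIndicator (p i).2 x.2 - N * (x.1 * x.2) := by
  rw [disc, mul_assoc]
  congr 1
  refine Finset.sum_congr rfl fun i _ => ?_
  simp only [cornerIndicator, Set.indicator, Set.mem_Ico, Pi.one_apply]
  grind

theorem haarCoeff_eq_sum_tent (p : Fin N → ℝ × ℝ) (hm₁ : m.1 < 2 ^ j.1) (hm₂ : m.2 < 2 ^ j.2) :
    haarCoeff N p j m =
      (∑ i, tent j.1 m.1 (p i).1 * tent j.2 m.2 (p i).2 - N / 2 ^ (j.1 + j.2 + 2)) /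
        2 ^ (j.1 + j.2 + 2) := by
  have hs₁ := dyadicIco_subset_Ico hm₁
  have hs₂ := dyadicIco_subset_Ico hm₂
  have hvol : volume (Set.Ico (0 : ℝ) 1) ≠ ⊤ := by simp
  have hcorner (i : Fin N) := integrableOn_unitSq_mul_haar
    (integrableOn_cornerIndicator (p i).1 hvol) (integrableOn_cornerIndicator (p i).2 hvol) j m
  have hid : IntegrableOn (fun t : ℝ => t) (Set.Ico 0 1) :=
    continuous_id.integrableOn_Icc.mono_set Set.Ico_subset_Icc_self
  simp_rw [haarCoeff, disc_eq_sum_cornerIndicator, sub_mul, Finset.sum_mul, mul_assoc (N : ℝ)]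
  rw [integral_sub (integrable_finsetSum _ fun i _ => hcorner i)
      ((integrableOn_unitSq_mul_haar hid hid j m).const_mul _),
    integral_finsetSum _ fun i _ => hcorner i, integral_const_mul,
    setIntegral_unitSq_mul_haar (fun t => t) (fun t => t)]
  simp_rw [setIntegral_unitSq_mul_haar (cornerIndicator _),
    setIntegral_cornerIndicator_mul_haar1 _ hs₁, setIntegral_cornerIndicator_mul_haar1 _ hs₂,
    setIntegral_id_mul_haar1 hs₁, setIntegral_id_mul_haar1 hs₂, neg_mul_neg, div_mul_div_comm]
  rw [← Finset.sum_div, sub_div]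
  ring

theorem haarCoeff_of_unique {i₀ : Fin N} (huniq : ∀ i, p i ∈ dyadic j m → i = i₀)
    (hm₁ : m.1 < 2 ^ j.1) (hm₂ : m.2 < 2 ^ j.2) :
    haarCoeff N p j m =
      (tent j.1 m.1 (p i₀).1 * tent j.2 m.2 (p i₀).2 - N / 2 ^ (j.1 + j.2 + 2)) /
        2 ^ (j.1 + j.2 + 2) := by
  rw [haarCoeff_eq_sum_tent p hm₁ hm₂, Fintype.sum_eq_single i₀]
  intro i hi
  by_cases h₁ : (p i).1 ∈ dyadicIco j.1 m.1
  · have h₂ : (p i).2 ∉ dyadicIco j.2 m.2 := fun h₂ => hi (huniq i ⟨h₁, h₂⟩)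
    rw [tent_eq_zero_of_notMem h₂, mul_zero]
  · rw [tent_eq_zero_of_notMem h₁, zero_mul]

lemma two_rpow_add_div_two_pow (k n : ℕ) (κ : ℝ) :
    (2 : ℝ) ^ ((k : ℝ) + κ) / 2 ^ (k + n) = 2 ^ (κ - n) := by
  rw [← Real.rpow_natCast, ← Real.rpow_sub two_pos]
  congr 1
  push_cast
  ring

lemma two_mul_sub_two_rpow_div (κ x : ℝ) (n : ℕ) :
    (2 * x - 2 ^ (κ - 3)) / 2 ^ (n + 1) = (x - 2 ^ (κ - 4)) / 2 ^ n := by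
  have hκ : (2 : ℝ) ^ (κ - 3) = 2 * 2 ^ (κ - 4) := by
    rw [show κ - 3 = κ - 4 + 1 by ring, Real.rpow_add_one two_ne_zero, mul_comm]
  rw [hκ, ← mul_sub, pow_succ', mul_div_mul_left _ _ two_ne_zero]

variable {κ : ℝ} {i₀ : Fin N}

theorem haarCoeff_of_unique_of_card (hN : (N : ℝ) = 2 ^ (((j.1 + j.2 : ℕ) : ℝ) + κ))
    (hp : p i₀ ∈ unitSq) (hi₀ : p i₀ ∈ dyadic j m) (huniq : ∀ i, p i ∈ dyadic j m → i = i₀) :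
    haarCoeff N p j m =
      (tent j.1 m.1 (p i₀).1 * tent j.2 m.2 (p i₀).2 - 2 ^ (κ - 2)) / 2 ^ (j.1 + j.2 + 2) := by
  rw [haarCoeff_of_unique huniq (index_lt_of_mem_dyadicIco hi₀.1 hp.1.2)
    (index_lt_of_mem_dyadicIco hi₀.2 hp.2.2), hN, two_rpow_add_div_two_pow, Nat.cast_ofNat]

theorem haarCoeff_succ_fst {m' : ℕ × ℕ} (hN : (N : ℝ) = 2 ^ (((j.1 + j.2 : ℕ) : ℝ) + κ))
    (hp : p i₀ ∈ unitSq) (hi₀ : p i₀ ∈ dyadic j m) (huniq : ∀ i, p i ∈ dyadic j m → i = i₀)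
    (hm' : p i₀ ∈ dyadic (j.1 + 1, j.2) m') :
    haarCoeff N p (j.1 + 1, j.2) m' =
      (min (tent j.1 m.1 (p i₀).1) (1 - tent j.1 m.1 (p i₀).1) * tent j.2 m.2 (p i₀).2 -
        2 ^ (κ - 4)) / 2 ^ (j.1 + j.2 + 2) := by
  have hindex : m'.2 = m.2 := dyadicIco_index_unique hm'.2 hi₀.2
  have hsub := dyadicIco_succ_subset_of_mem hi₀.1 hm'.1
  have huniq' : ∀ i, p i ∈ dyadic (j.1 + 1, j.2) m' → i = i₀ :=
    fun i hi => huniq i ⟨hsub hi.1, hindex ▸ hi.2⟩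
  have hN' : (N : ℝ) = 2 ^ (((j.1 + 1 + j.2 : ℕ) : ℝ) + (κ - 1)) := by
    rw [hN]; congr 1; push_cast; ring
  rw [haarCoeff_of_unique_of_card (j := (j.1 + 1, j.2)) hN' hp hm' huniq',
    tent_succ hi₀.1 hm'.1, hindex, show κ - 1 - 2 = κ - 3 by ring,
    show j.1 + 1 + j.2 + 2 = j.1 + j.2 + 2 + 1 by ring, mul_assoc, two_mul_sub_two_rpow_div]

theorem haarCoeff_succ_snd {m' : ℕ × ℕ} (hN : (N : ℝ) = 2 ^ (((j.1 + j.2 : ℕ) : ℝ) + κ))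
    (hp : p i₀ ∈ unitSq) (hi₀ : p i₀ ∈ dyadic j m) (huniq : ∀ i, p i ∈ dyadic j m → i = i₀)
    (hm' : p i₀ ∈ dyadic (j.1, j.2 + 1) m') :
    haarCoeff N p (j.1, j.2 + 1) m' =
      (tent j.1 m.1 (p i₀).1 * min (tent j.2 m.2 (p i₀).2) (1 - tent j.2 m.2 (p i₀).2) -
        2 ^ (κ - 4)) / 2 ^ (j.1 + j.2 + 2) := by
  have hindex : m'.1 = m.1 := dyadicIco_index_unique hm'.1 hi₀.1
  have hsub := dyadicIco_succ_subset_of_mem hi₀.2 hm'.2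
  have huniq' : ∀ i, p i ∈ dyadic (j.1, j.2 + 1) m' → i = i₀ :=
    fun i hi => huniq i ⟨hindex ▸ hi.1, hsub hi.2⟩
  have hN' : (N : ℝ) = 2 ^ (((j.1 + (j.2 + 1) : ℕ) : ℝ) + (κ - 1)) := by
    rw [hN]; congr 1; push_cast; ring
  rw [haarCoeff_of_unique_of_card (j := (j.1, j.2 + 1)) hN' hp hm' huniq',
    tent_succ hi₀.2 hm'.2, hindex, show κ - 1 - 2 = κ - 3 by ring,
    show j.1 + (j.2 + 1) + 2 = j.1 + j.2 + 2 + 1 by ring, mul_left_comm,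
    two_mul_sub_two_rpow_div]

end HaarCoefficients

section LowerBound

variable {α β : ℝ}

lemma hfun_le_gk_of_mem_Ico (κ : ℝ) (hα : α ∈ Set.Ico (1 / 2) 1) (hβ : β ∈ Set.Ico (1 / 2) 1) :
    hfun κ ≤ gk κ α β := by
  refine csInf_le ⟨0, ?_⟩ ⟨α, β, hα.1, hα.2, hβ.1, hβ.2, rfl⟩
  rintro _ ⟨a, b, -, -, -, -, rfl⟩
  unfold gk
  positivity

/-- A tent may have height exactly `1` at a point, whereas `hfun` is an infimum over a half-open
square; continuity of `gk` bridges the gap. -/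
lemma hfun_le_gk (κ : ℝ) (hα : α ∈ Set.Icc (1 / 2) 1) (hβ : β ∈ Set.Icc (1 / 2) 1) :
    hfun κ ≤ gk κ α β := by
  have hclosed : IsClosed {x : ℝ × ℝ | hfun κ ≤ gk κ x.1 x.2} :=
    isClosed_le continuous_const (by unfold gk; fun_prop)
  have hsub : closure (Set.Ico (1 / 2 : ℝ) 1 ×ˢ Set.Ico (1 / 2 : ℝ) 1) ⊆
      {x : ℝ × ℝ | hfun κ ≤ gk κ x.1 x.2} :=
    closure_minimal (fun _ hx => hfun_le_gk_of_mem_Ico κ hx.1 hx.2) hclosed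
  rw [closure_prod_eq, closure_Ico (by norm_num)] at hsub
  exact hsub (Set.mk_mem_prod hα hβ)

lemma gam_le_sq_sub_add_sq_sub (κ x : ℝ) :
    gam κ ≤ ((x - 2 ^ (κ - 2)) ^ 2 + (x - 2 ^ (κ - 4)) ^ 2) / 16 := by
  have hcoarse : (2 : ℝ) ^ (κ - 2) = 4 * 2 ^ (κ - 4) := by
    rw [show κ - 2 = κ - 4 + 2 by ring, Real.rpow_add two_pos]
    norm_num
    ring
  have hmin : 9 * (2 : ℝ) ^ (2 * κ - 13) = 9 / 2 * (2 ^ (κ - 4)) ^ 2 / 16 := by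
    rw [show 2 * κ - 13 = (κ - 4) + (κ - 4) + (-5 : ℤ) by push_cast; ring,
      Real.rpow_add two_pos, Real.rpow_add two_pos, Real.rpow_intCast]
    norm_num
    ring
  refine (min_le_left _ _).trans ?_
  rw [hmin, hcoarse]
  gcongr
  linarith [sq_nonneg (2 * x - 5 * (2 : ℝ) ^ (κ - 4))]

theorem gam_le (κ : ℝ) (hα : α ∈ Set.Icc 0 1) (hβ : β ∈ Set.Icc 0 1) :
    gam κ ≤ ((α * β - 2 ^ (κ - 2)) ^ 2 + (min α (1 - α) * β - 2 ^ (κ - 4)) ^ 2 +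
      (α * min β (1 - β) - 2 ^ (κ - 4)) ^ 2) / 16 := by
  rcases le_total α (1 / 2) with hα2 | hα2
  · rw [min_eq_left (by linarith : α ≤ 1 - α)]
    exact (gam_le_sq_sub_add_sq_sub κ (α * β)).trans
      (div_le_div_of_nonneg_right (le_add_of_nonneg_right (sq_nonneg _)) (by norm_num))
  rcases le_total β (1 / 2) with hβ2 | hβ2
  · rw [min_eq_left (by linarith : β ≤ 1 - β), add_right_comm]
    exact (gam_le_sq_sub_add_sq_sub κ (α * β)).trans
      (div_le_div_of_nonneg_right (le_add_of_nonneg_right (sq_nonneg _)) (by norm_num))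
  · rw [min_eq_right (by linarith : 1 - α ≤ α), min_eq_right (by linarith : 1 - β ≤ β)]
    calc gam κ ≤ (2 : ℝ) ^ (-4 : ℝ) * hfun κ := min_le_right _ _
      _ ≤ (2 : ℝ) ^ (-4 : ℝ) * gk κ α β := by
        gcongr
        exact hfun_le_gk κ ⟨hα2, hα.2⟩ ⟨hβ2, hβ.2⟩
      _ = _ := by
        rw [show (-4 : ℝ) = (-4 : ℤ) by norm_num, Real.rpow_intCast, gk]
        norm_num
        ring

end LowerBound

theorem rho_lower_bound_levelM_general (κ : ℝ) (N : ℕ) (p : Fin N → ℝ × ℝ) (j m : ℕ × ℕ)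
    (hN : (N : ℝ) = 2 ^ (((j.1 + j.2 : ℕ) : ℝ) + κ))
    (i₀ : Fin N) (hp : p i₀ ∈ unitSq) (hi₀ : p i₀ ∈ dyadic j m)
    (huniq : ∀ i, p i ∈ dyadic j m → i = i₀)
    (m' : ℕ × ℕ) (hpm' : p i₀ ∈ dyadic (j.1 + 1, j.2) m')
    (m'' : ℕ × ℕ) (hpm'' : p i₀ ∈ dyadic (j.1, j.2 + 1) m'') :
    gam κ ≤ (2 : ℝ) ^ (2 * (j.1 + j.2)) *
      (haarCoeff N p j m ^ 2 + haarCoeff N p (j.1 + 1, j.2) m' ^ 2 +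
        haarCoeff N p (j.1, j.2 + 1) m'' ^ 2) := by
  rw [haarCoeff_of_unique_of_card hN hp hi₀ huniq, haarCoeff_succ_fst hN hp hi₀ huniq hpm',
    haarCoeff_succ_snd hN hp hi₀ huniq hpm'']
  refine (gam_le κ (tent_mem_Icc j.1 m.1 (p i₀).1) (tent_mem_Icc j.2 m.2 (p i₀).2)).trans_eq ?_
  have hscale : ((2 : ℝ) ^ (j.1 + j.2 + 2)) ^ 2 = 16 * 2 ^ (2 * (j.1 + j.2)) := by ring
  simp only [div_pow, hscale]
  field_simp

/-- If `N = 2^{M+κ}`, `|j| = M`, and `I_{j,m}` contains exactly one point `p i₀` of `P`,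
and `I_{j',m'}, I_{j'',m''}` (with `j' = (j₁+1,j₂)`, `j'' = (j₁,j₂+1)`) are the dyadic
subintervals of `I_{j,m}` containing the same point, then
`2^{2M}·(μ_{j,m}² + μ_{j',m'}² + μ_{j'',m''}²) ≥ γ(κ)`. -/
theorem rho_lower_bound_levelM (M : ℕ) (κ : ℝ) (hκ0 : 0 ≤ κ) (hκ1 : κ < 1)
    (N : ℕ) (p : Fin N → ℝ × ℝ) (hp : ∀ i, p i ∈ unitSq)
    (hN : (N : ℝ) = 2 ^ ((M : ℝ) + κ))
    (j : ℕ × ℕ) (hj : j.1 + j.2 = M)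
    (m : ℕ × ℕ) (hm1 : m.1 < 2 ^ j.1) (hm2 : m.2 < 2 ^ j.2)
    (i₀ : Fin N) (hi₀ : p i₀ ∈ dyadic j m)
    (huniq : ∀ i, p i ∈ dyadic j m → i = i₀)
    (m' : ℕ × ℕ) (hm'1 : m'.1 < 2 ^ (j.1 + 1)) (hm'2 : m'.2 < 2 ^ j.2)
    (hpm' : p i₀ ∈ dyadic (j.1 + 1, j.2) m')
    (m'' : ℕ × ℕ) (hm''1 : m''.1 < 2 ^ j.1) (hm''2 : m''.2 < 2 ^ (j.2 + 1))
    (hpm'' : p i₀ ∈ dyadic (j.1, j.2 + 1) m'') :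
    gam κ ≤ (2:ℝ) ^ (2 * M) *
      ((∫ x in unitSq, disc N p x * haar j m x) ^ 2 +
       (∫ x in unitSq, disc N p x * haar (j.1 + 1, j.2) m' x) ^ 2 +
       (∫ x in unitSq, disc N p x * haar (j.1, j.2 + 1) m'' x) ^ 2) := by
  subst hj
  exact rho_lower_bound_levelM_general κ N p j m hN i₀ (hp i₀) hi₀ huniq m' hpm' m'' hpm''

end
end

section
/- Let M ∈ ℕ₀ and 0 ≤ κ < 1, and let (a_r(M))_{r∈ℕ₀} be nonnegative integers satisfying Σ_{r≥0} a_r(M) = (M+1)·2^M and Σ_{r≥0} r·a_r(M) = (M+1)·2^{M+κ}. Then a₀(M)·2^{2κ-8} + a₁(M)·(γ(κ) − 2^{-1}·γ(κ−1)) ≥ (M+1)·2^M·(2−2^κ)·(γ(κ) − 2^{-1}·γ(κ−1)). -/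
noncomputable section

/-!
The triple `(x, y, z) = (αβ, α(1-β), (1-α)β)` lies on the quadric `(x + y) * (x + z) = x`, so `h(κ)`
is at least the squared distance from `2^κ/16 * (4, 1, 1)` to this quadric. For `2^κ ≤ 2` that gives
`h(κ) ≥ (3/64 * 2^κ)²`, whence `γ(κ) ≥ γ(κ-1)/2`. On the other hand,
`2 * a 0 + a 1 ≥ 2 * ∑ a r - ∑ r * a r`, since the terms with `r ≥ 2` contribute nonpositively to
the right-hand side. Multiplying by `γ(κ) - γ(κ-1)/2 ≥ 0` and using
`2 * (γ(κ) - γ(κ-1)/2) ≤ 2^(2κ-8)` for the coefficient of `a 0` gives the theorem.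
-/

open Finset

lemma mul_sub_le_sum_range_sub_mul {a : ℕ → ℝ} {S T : ℝ} (ha : ∀ r, 0 ≤ a r) (hS : HasSum a S)
    (hT : HasSum (fun r : ℕ => (r : ℝ) * a r) T) (k : ℕ) :
    k * S - T ≤ ∑ r ∈ range k, ((k : ℝ) - r) * a r := by
  have hsum : HasSum (fun r : ℕ => ((r : ℝ) - k) * a r) (T - k * S) := by
    simpa only [sub_mul] using hT.sub (hS.mul_left (k : ℝ))
  have htail : ∀ r ∉ range k, 0 ≤ ((r : ℝ) - k) * a r := fun r hr =>
    mul_nonneg (sub_nonneg.2 (by exact_mod_cast not_lt.1 (mt mem_range.2 hr))) (ha r)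
  calc k * S - T = -(T - k * S) := by ring
    _ ≤ -∑ r ∈ range k, ((r : ℝ) - k) * a r := neg_le_neg (sum_le_hasSum _ htail hsum)
    _ = ∑ r ∈ range k, ((k : ℝ) - r) * a r := by simp only [← sum_neg_distrib, ← neg_mul, neg_sub]

lemma sum_mul_sq_le_sq_mul_sq_three (a b c x y z : ℝ) :
    (a * x + b * y + c * z) ^ 2 ≤ (a ^ 2 + b ^ 2 + c ^ 2) * (x ^ 2 + y ^ 2 + z ^ 2) := by
  simpa [Fin.sum_univ_three] using sum_mul_sq_le_sq_mul_sq univ ![a, b, c] ![x, y, z]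

lemma add_mul_add_le_sum_sq (x y z : ℝ) :
    (x + y) * (x + z) ≤ 3 / 2 * (x ^ 2 + y ^ 2 + z ^ 2) := by
  linarith [sq_nonneg (x - y - z), sq_nonneg (y - z)]

lemma sq_le_dist_sq_of_add_mul_add_eq {c x y z : ℝ} (hc₀ : 0 ≤ c) (hc₂ : c ≤ 2)
    (h : (x + y) * (x + z) = x) :
    (3 / 64 * c) ^ 2 ≤ (x - c / 4) ^ 2 + (y - c / 16) ^ 2 + (z - c / 16) ^ 2 := by
  set u := x - c / 4 with hu
  set v := y - c / 16 with hv
  set w := z - c / 16 with hw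
  have hcc : 0 ≤ c * (2 - c) := mul_nonneg hc₀ (sub_nonneg.2 hc₂)
  set d := √(u ^ 2 + v ^ 2 + w ^ 2)
  have hd : d ^ 2 = u ^ 2 + v ^ 2 + w ^ 2 := Real.sq_sqrt (by positivity)
  have hd₀ : 0 ≤ d := Real.sqrt_nonneg _
  -- Taylor expansion of `(x + y) * (x + z) - x = 0` around `(c / 4, c / 16, c / 16)`
  have taylor : c / 4 - (5 / 16 * c) ^ 2 =
      ((5 / 8 * c - 1) * u + 5 / 16 * c * v + 5 / 16 * c * w) + (u + v) * (u + w) := by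
    rw [hu, hv, hw]
    linear_combination -h
  have gradient_le : (5 / 8 * c - 1) ^ 2 + (5 / 16 * c) ^ 2 + (5 / 16 * c) ^ 2 ≤ 1 := by
    linarith
  have linear_le : (5 / 8 * c - 1) * u + 5 / 16 * c * v + 5 / 16 * c * w ≤ d := by
    refine le_of_sq_le_sq ?_ hd₀
    calc ((5 / 8 * c - 1) * u + 5 / 16 * c * v + 5 / 16 * c * w) ^ 2
        ≤ ((5 / 8 * c - 1) ^ 2 + (5 / 16 * c) ^ 2 + (5 / 16 * c) ^ 2) *
            (u ^ 2 + v ^ 2 + w ^ 2) := sum_mul_sq_le_sq_mul_sq_three ..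
      _ ≤ 1 * (u ^ 2 + v ^ 2 + w ^ 2) := by gcongr
      _ = d ^ 2 := by rw [one_mul, hd]
  have quadratic_le : (u + v) * (u + w) ≤ 3 / 2 * d ^ 2 := hd ▸ add_mul_add_le_sum_sq u v w
  rw [← hd]
  by_contra! hlt
  have hdc : d < 3 / 64 * c := lt_of_pow_lt_pow_left₀ 2 (by positivity) hlt
  -- the three bounds turn `taylor` into `1664 * c < 827 * c ^ 2`, but `c ^ 2 ≤ 2 * c`
  linarith

lemma two_rpow_two_mul_sub (κ : ℝ) (n : ℕ) : (2 : ℝ) ^ (2 * κ - n) = (2 ^ κ) ^ 2 / 2 ^ n := by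
  rw [Real.rpow_sub_natCast two_ne_zero, mul_comm, ← Nat.cast_ofNat (R := ℝ),
    Real.rpow_mul_natCast (by positivity)]

lemma gk_nonneg (κ α β : ℝ) : 0 ≤ gk κ α β := by
  unfold gk
  positivity

lemma sq_le_gk {κ : ℝ} (hκ : κ ≤ 1) (α β : ℝ) : (3 / 64 * (2 : ℝ) ^ κ) ^ 2 ≤ gk κ α β := by
  have hc₂ : (2 : ℝ) ^ κ ≤ 2 := Real.rpow_le_self_of_one_le one_le_two hκ
  have h₂ : (2 : ℝ) ^ (κ - 2) = 2 ^ κ / 4 := by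
    rw [Real.rpow_sub two_pos]
    norm_num
  have h₄ : (2 : ℝ) ^ (κ - 4) = 2 ^ κ / 16 := by
    rw [Real.rpow_sub two_pos]
    norm_num
  rw [gk, h₂, h₄]
  exact sq_le_dist_sq_of_add_mul_add_eq (by positivity) hc₂ (by ring)

lemma le_hfun {κ t : ℝ}
    (h : ∀ α ∈ Set.Ico (1 / 2 : ℝ) 1, ∀ β ∈ Set.Ico (1 / 2 : ℝ) 1, t ≤ gk κ α β) : t ≤ hfun κ := by
  refine le_csInf ⟨_, 1 / 2, 1 / 2, by norm_num, by norm_num, by norm_num, by norm_num, rfl⟩ ?_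
  rintro _ ⟨α, β, hα, hα₁, hβ, hβ₁, rfl⟩
  exact h α ⟨hα, hα₁⟩ β ⟨hβ, hβ₁⟩

lemma gam_nonneg (κ : ℝ) : 0 ≤ gam κ :=
  le_min (by positivity) (mul_nonneg (by positivity) (le_hfun fun α _ β _ => gk_nonneg κ α β))

lemma gam_le_s14 (κ : ℝ) : gam κ ≤ 9 / 2 ^ 13 * ((2 : ℝ) ^ κ) ^ 2 := by
  calc gam κ ≤ 9 * (2 : ℝ) ^ (2 * κ - (13 : ℕ)) := min_le_left _ _
    _ = _ := by rw [two_rpow_two_mul_sub]; ring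

lemma le_gam {κ : ℝ} (hκ : κ ≤ 1) : 9 / 2 ^ 16 * ((2 : ℝ) ^ κ) ^ 2 ≤ gam κ := by
  refine le_min ?_ ?_
  · calc 9 / 2 ^ 16 * ((2 : ℝ) ^ κ) ^ 2 ≤ 9 * (((2 : ℝ) ^ κ) ^ 2 / 2 ^ 13) := by
          linarith [sq_nonneg ((2 : ℝ) ^ κ)]
      _ = 9 * (2 : ℝ) ^ (2 * κ - 13) := by rw [← two_rpow_two_mul_sub, Nat.cast_ofNat]
  · calc 9 / 2 ^ 16 * ((2 : ℝ) ^ κ) ^ 2 = (2 : ℝ) ^ (-4 : ℝ) * (3 / 64 * (2 : ℝ) ^ κ) ^ 2 := by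
          rw [Real.rpow_neg_ofNat]
          ring
      _ ≤ (2 : ℝ) ^ (-4 : ℝ) * hfun κ := by
          gcongr
          exact le_hfun fun α _ β _ => sq_le_gk hκ α β

lemma half_gam_sub_one_le_gam {κ : ℝ} (hκ : κ ≤ 1) : (2 : ℝ)⁻¹ * gam (κ - 1) ≤ gam κ := by
  calc (2 : ℝ)⁻¹ * gam (κ - 1) ≤ 2⁻¹ * (9 / 2 ^ 13 * ((2 : ℝ) ^ (κ - 1)) ^ 2) := by
        gcongr
        exact gam_le_s14 (κ - 1)
    _ = 9 / 2 ^ 16 * ((2 : ℝ) ^ κ) ^ 2 := by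
        rw [Real.rpow_sub_one two_ne_zero]
        ring
    _ ≤ gam κ := le_gam hκ

lemma two_mul_gam_sub_le (κ : ℝ) :
    2 * (gam κ - (2 : ℝ)⁻¹ * gam (κ - 1)) ≤ (2 : ℝ) ^ (2 * κ - 8) := by
  calc 2 * (gam κ - (2 : ℝ)⁻¹ * gam (κ - 1)) ≤ 2 * gam κ := by linarith [gam_nonneg (κ - 1)]
    _ ≤ ((2 : ℝ) ^ κ) ^ 2 / 2 ^ 8 := by linarith [gam_le_s14 κ, sq_nonneg ((2 : ℝ) ^ κ)]
    _ = (2 : ℝ) ^ (2 * κ - 8) := by rw [← two_rpow_two_mul_sub, Nat.cast_ofNat]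

theorem even_distribution_levelM_general {κ S T : ℝ} (hκ : κ ≤ 1) {a : ℕ → ℝ} (ha : ∀ r, 0 ≤ a r)
    (hS : HasSum a S) (hT : HasSum (fun r : ℕ => (r : ℝ) * a r) T) :
    (2 * S - T) * (gam κ - (2 : ℝ)⁻¹ * gam (κ - 1)) ≤
      a 0 * (2 : ℝ) ^ (2 * κ - 8) + a 1 * (gam κ - (2 : ℝ)⁻¹ * gam (κ - 1)) := by
  have hcount : 2 * S - T ≤ 2 * a 0 + a 1 := by
    calc 2 * S - T ≤ ∑ r ∈ range 2, ((2 : ℝ) - r) * a r :=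
          mul_sub_le_sum_range_sub_mul ha hS hT 2
      _ = 2 * a 0 + a 1 := by
          norm_num [sum_range_succ]
  set D := gam κ - (2 : ℝ)⁻¹ * gam (κ - 1)
  calc (2 * S - T) * D ≤ (2 * a 0 + a 1) * D :=
        mul_le_mul_of_nonneg_right hcount (sub_nonneg.2 (half_gam_sub_one_le_gam hκ))
    _ = a 0 * (2 * D) + a 1 * D := by ring
    _ ≤ a 0 * (2 : ℝ) ^ (2 * κ - 8) + a 1 * D := by
        gcongr
        exacts [ha 0, two_mul_gam_sub_le κ]

/-- If the nonnegative integers `a_r(M)` satisfy `Σ_r a_r(M) = (M+1)·2^M` and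
`Σ_r r·a_r(M) = (M+1)·2^{M+κ}`, then
`a₀(M)·2^{2κ-8} + a₁(M)·(γ(κ) − 2^{-1}γ(κ−1)) ≥ (M+1)·2^M·(2−2^κ)·(γ(κ) − 2^{-1}γ(κ−1))`. -/
theorem even_distribution_levelM (M : ℕ) (κ : ℝ) (hκ0 : 0 ≤ κ) (hκ1 : κ < 1)
    (a : ℕ → ℕ)
    (hsum : HasSum (fun r : ℕ => (a r : ℝ)) (((M : ℝ) + 1) * 2 ^ M))
    (hsum' : HasSum (fun r : ℕ => (r : ℝ) * (a r : ℝ)) (((M : ℝ) + 1) * 2 ^ ((M : ℝ) + κ))) :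
    ((M : ℝ) + 1) * 2 ^ M * (2 - (2:ℝ) ^ κ) * (gam κ - (2:ℝ)⁻¹ * gam (κ - 1)) ≤
      (a 0 : ℝ) * (2:ℝ) ^ (2 * κ - 8) + (a 1 : ℝ) * (gam κ - (2:ℝ)⁻¹ * gam (κ - 1)) := by
  convert even_distribution_levelM_general hκ1.le (fun r => (a r).cast_nonneg) hsum hsum' using 2
  rw [Real.rpow_add two_pos, Real.rpow_natCast]
  ring

end
end

section
/- Let M ∈ ℕ₀ and 0 ≤ κ < 1, and let (a_r(M+1))_{r∈ℕ₀} be nonnegative integers satisfying Σ_{r≥0} a_r(M+1) = (M+2)·2^{M+1} and Σ_{r≥0} r·a_r(M+1) = (M+2)·2^{M+κ}. Then a₀(M+1)·2^{2κ-11} + a₁(M+1)·2^{-1}·γ(κ−1) ≥ (M+2)·2^M·((2−2^κ)·2^{2κ-11} + 2^κ·2^{-1}·γ(κ−1)). -/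
noncomputable section

theorem gam_le_two_rpow (κ : ℝ) : gam κ ≤ (2 : ℝ) ^ (2 * κ - 9) := by
  have hshift : (2 : ℝ) ^ (2 * κ - 9) = 16 * (2 : ℝ) ^ (2 * κ - 13) := by
    rw [show 2 * κ - 9 = 4 + (2 * κ - 13) by ring, Real.rpow_add two_pos]
    norm_num
  calc
    gam κ ≤ 9 * (2 : ℝ) ^ (2 * κ - 13) := min_le_left _ _
    _ ≤ 16 * (2 : ℝ) ^ (2 * κ - 13) := by gcongr; norm_num
    _ = (2 : ℝ) ^ (2 * κ - 9) := hshift.symm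

/- The affine function `r ↦ (1 - r) * A + r * B` takes the values `A` and `B` at `0` and `1`, and
`0 ≤ A`, `2 * B ≤ A` make it nonpositive at every integer `r ≥ 2`; sum it against `a`. -/
theorem affine_moments_le_first_two_terms {a : ℕ → ℝ} (ha : ∀ r, 0 ≤ a r) {S T A B : ℝ}
    (hS : HasSum a S) (hT : HasSum (fun r : ℕ ↦ r * a r) T) (hA : 0 ≤ A) (hBA : 2 * B ≤ A) :
    (S - T) * A + T * B ≤ a 0 * A + a 1 * B := by
  have hsum : HasSum (fun r : ℕ ↦ r * a r * (A - B) - a r * A) (T * (A - B) - S * A) :=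
    (hT.mul_right _).sub (hS.mul_right _)
  have htail : ∀ r ∉ Finset.range 2, 0 ≤ r * a r * (A - B) - a r * A := by
    intro r hr
    have hr2 : (2 : ℝ) ≤ r := by exact_mod_cast not_lt.mp (Finset.mem_range.not.mp hr)
    have hcoeff : 0 ≤ r * (A - B) - A := by
      have := mul_le_mul_of_nonneg_right hr2 (show 0 ≤ A - B by linarith)
      linarith
    calc
      0 ≤ a r * (r * (A - B) - A) := mul_nonneg (ha r) hcoeff
      _ = r * a r * (A - B) - a r * A := by ring
  have hfirst := sum_le_hasSum (Finset.range 2) htail hsum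
  simp only [Finset.sum_range_succ, Finset.sum_range_zero, Nat.cast_zero, Nat.cast_one] at hfirst
  linarith

theorem even_distribution_levelM1_general (N κ : ℝ) {a : ℕ → ℝ} (ha : ∀ r, 0 ≤ a r)
    (hsum : HasSum a (N * 2)) (hsum' : HasSum (fun r : ℕ ↦ r * a r) (N * (2 : ℝ) ^ κ)) :
    N * ((2 - (2 : ℝ) ^ κ) * (2 : ℝ) ^ (2 * κ - 11) +
        (2 : ℝ) ^ κ * ((2 : ℝ)⁻¹ * gam (κ - 1))) ≤
      a 0 * (2 : ℝ) ^ (2 * κ - 11) + a 1 * ((2 : ℝ)⁻¹ * gam (κ - 1)) := by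
  have hgam : 2 * ((2 : ℝ)⁻¹ * gam (κ - 1)) ≤ (2 : ℝ) ^ (2 * κ - 11) := by
    rw [mul_inv_cancel_left₀ two_ne_zero]
    exact (gam_le_two_rpow (κ - 1)).trans_eq (by ring_nf)
  have hmoments := affine_moments_le_first_two_terms ha hsum hsum' (by positivity) hgam
  linarith

/-- If the nonnegative integers `a_r(M+1)` satisfy `Σ_r a_r(M+1) = (M+2)·2^{M+1}` and
`Σ_r r·a_r(M+1) = (M+2)·2^{M+κ}`, then
`a₀(M+1)·2^{2κ-11} + a₁(M+1)·2^{-1}γ(κ−1) ≥ (M+2)·2^M·((2−2^κ)·2^{2κ-11} + 2^κ·2^{-1}γ(κ−1))`. -/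
theorem even_distribution_levelM1 (M : ℕ) (κ : ℝ) (hκ0 : 0 ≤ κ) (hκ1 : κ < 1)
    (a : ℕ → ℕ)
    (hsum : HasSum (fun r : ℕ => (a r : ℝ)) (((M : ℝ) + 2) * 2 ^ (M + 1)))
    (hsum' : HasSum (fun r : ℕ => (r : ℝ) * (a r : ℝ)) (((M : ℝ) + 2) * 2 ^ ((M : ℝ) + κ))) :
    ((M : ℝ) + 2) * 2 ^ M *
        ((2 - (2:ℝ) ^ κ) * (2:ℝ) ^ (2 * κ - 11) + (2:ℝ) ^ κ * ((2:ℝ)⁻¹ * gam (κ - 1))) ≤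
      (a 0 : ℝ) * (2:ℝ) ^ (2 * κ - 11) + (a 1 : ℝ) * ((2:ℝ)⁻¹ * gam (κ - 1)) := by
  refine even_distribution_levelM1_general ((M + 2) * 2 ^ M) κ (fun r ↦ (a r).cast_nonneg) ?_ ?_
  · rwa [mul_assoc, ← pow_succ]
  · rwa [mul_assoc, ← Real.rpow_natCast, ← Real.rpow_add two_pos]

end
end

section
/- Let M ∈ ℕ₀ and 0 ≤ κ < 1, and let P be a point set in [0,1)² with N = 2^{M+κ} points. Then ‖D_P | L₂‖² ≥ Σ_{ℓ=M+1}^∞ (ℓ+1)·2^ℓ·(2^ℓ − 2^{M+κ})·2^{2M+2κ−4ℓ−8}. -/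
open MeasureTheory

noncomputable section

/-- The `L₂`-discrepancy `‖D_P | L₂‖ = (∫_{[0,1)²} D_P(x)² dx)^{1/2}`. -/
def L2disc (N : ℕ) (p : Fin N → ℝ × ℝ) : ℝ :=
  Real.sqrt (∫ x in unitSq, disc N p x ^ 2)

/-!
Expand the discrepancy function in the orthonormal system of two-dimensional Haar wavelets and
apply Bessel's inequality. If the dyadic rectangle supporting a wavelet contains no point of the
configuration, each box indicator is, in one of the coordinates, constant on the support, so that
only the area term `N x₁ x₂` contributes to the Haar coefficient; for levels `j₁ + j₂ = ℓ` the
square of the coefficient is `2 ^ ℓ * N ^ 2 / 2 ^ (4 * ℓ + 8)`. Each of the `ℓ + 1` pairs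
`(j₁, j₂)` has `2 ^ ℓ` rectangles, of which at least `2 ^ ℓ - N` contain no point.
-/

section Bessel

variable {α ι : Type*} [MeasurableSpace α] {μ : Measure α} {f : α → ℝ} {g : ι → α → ℝ}

lemma sum_sq_integral_mul_le_integral_sq [DecidableEq ι] (hf : MemLp f 2 μ)
    (hg : ∀ i, MemLp (g i) 2 μ)
    (hgg : ∀ i k, ∫ x, g i x * g k x ∂μ = if i = k then 1 else 0) (s : Finset ι) :
    ∑ i ∈ s, (∫ x, f x * g i x ∂μ) ^ 2 ≤ ∫ x, f x ^ 2 ∂μ := by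
  have inner_toLp {u v : α → ℝ} (hu : MemLp u 2 μ) (hv : MemLp v 2 μ) :
      inner ℝ (hu.toLp u) (hv.toLp v) = ∫ x, v x * u x ∂μ := by
    rw [L2.inner_def]
    refine integral_congr_ae ?_
    filter_upwards [hu.coeFn_toLp, hv.coeFn_toLp] with x hux hvx
    simp only [hux, hvx, RCLike.inner_apply, conj_trivial]
  have orthonormal : Orthonormal ℝ fun i ↦ (hg i).toLp (g i) := by
    refine orthonormal_iff_ite.2 fun i k ↦ ?_
    rw [inner_toLp, hgg, if_congr eq_comm rfl rfl]
  simpa only [← real_inner_self_eq_norm_sq, inner_toLp, Real.norm_eq_abs, sq_abs, ← sq]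
    using orthonormal.sum_inner_products_le (x := hf.toLp f) (s := s)

lemma sum_sq_integral_mul_le_setIntegral_sq [DecidableEq ι] {S : Set α} (hS : MeasurableSet S)
    (hf : MemLp f 2 (μ.restrict S)) (hg : ∀ i, MemLp (g i) 2 μ)
    (hgg : ∀ i k, ∫ x, g i x * g k x ∂μ = if i = k then 1 else 0) {s : Finset ι}
    (hgS : ∀ i ∈ s, Function.support (g i) ⊆ S) :
    ∑ i ∈ s, (∫ x, f x * g i x ∂μ) ^ 2 ≤ ∫ x in S, f x ^ 2 ∂μ := by
  have coefficient : ∀ i ∈ s, ∫ x, S.indicator f x * g i x ∂μ = ∫ x, f x * g i x ∂μ := by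
    intro i hi
    refine integral_congr_ae (.of_forall fun x ↦ ?_)
    by_cases hx : x ∈ S
    · simp only [Set.indicator_of_mem hx]
    · simp only [Function.notMem_support.1 fun h ↦ hx (hgS i hi h), mul_zero]
  have norm_sq : ∫ x, S.indicator f x ^ 2 ∂μ = ∫ x in S, f x ^ 2 ∂μ := by
    rw [← integral_indicator hS]
    refine integral_congr_ae (.of_forall fun x ↦ ?_)
    by_cases hx : x ∈ S <;> simp [hx]
  rw [← norm_sq, Finset.sum_congr rfl fun i hi ↦ by rw [← coefficient i hi]]
  exact sum_sq_integral_mul_le_integral_sq ((memLp_indicator_iff_restrict hS).2 hf) hg hgg s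

end Bessel

/-- The index `m` of the dyadic interval `[m / 2 ^ j, (m + 1) / 2 ^ j)` containing `x`. -/
def dyadicIndex (j : ℕ) (x : ℝ) : ℤ := ⌊2 ^ j * x⌋

lemma dyadicIndex_eq_iff {j : ℕ} {m : ℤ} {x : ℝ} :
    dyadicIndex j x = m ↔ 2 ^ j * x - m ∈ Set.Ico (0 : ℝ) 1 := by
  rw [dyadicIndex, Int.floor_eq_iff, Set.mem_Ico, sub_nonneg, sub_lt_iff_lt_add']

lemma monotone_dyadicIndex (j : ℕ) : Monotone (dyadicIndex j) := fun _ _ h ↦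
  Int.floor_mono (by gcongr)

lemma dyadicIndex_eq_ediv {i j : ℕ} (hij : i ≤ j) (x : ℝ) :
    dyadicIndex i x = dyadicIndex j x / 2 ^ (j - i) := by
  obtain ⟨k, rfl⟩ := Nat.exists_eq_add_of_le hij
  have h : (2 : ℝ) ^ i * x = 2 ^ (i + k) * x / (2 ^ k : ℕ) := by
    push_cast
    rw [pow_add]
    field_simp
  rw [dyadicIndex, h, Int.floor_div_natCast, Nat.add_sub_cancel_left, dyadicIndex]
  push_cast
  rfl

lemma dyadicIndex_mem_Ico_iff {j : ℕ} {x : ℝ} :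
    dyadicIndex j x ∈ Finset.Ico 0 (2 ^ j) ↔ x ∈ Set.Ico (0 : ℝ) 1 := by
  have h : (0 : ℝ) < 2 ^ j := by positivity
  rw [Finset.mem_Ico, dyadicIndex, Int.floor_nonneg, Int.floor_lt, mul_nonneg_iff_of_pos_left h]
  push_cast
  rw [mul_lt_iff_lt_one_right h, Set.mem_Ico]

/-- The pair of indices of the dyadic rectangle of levels `j.1`, `j.2` containing `x`. -/
def dyadicIndex₂ (j : ℕ × ℕ) (x : ℝ × ℝ) : ℤ × ℤ := (dyadicIndex j.1 x.1, dyadicIndex j.2 x.2)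

/-- The Haar mother wavelet: `1` on `[0, 1/2)`, `-1` on `[1/2, 1)` and `0` elsewhere. -/
def haarMother (y : ℝ) : ℝ :=
  (Set.Ico 0 (1 / 2)).indicator 1 y - (Set.Ico (1 / 2) 1).indicator 1 y

lemma haarMother_eq_ite (y : ℝ) :
    haarMother y = if ⌊2 * y⌋ = 0 then 1 else if ⌊2 * y⌋ = 1 then -1 else 0 := by
  have left : y ∈ Set.Ico 0 (1 / 2) ↔ ⌊2 * y⌋ = 0 := by
    rw [Int.floor_eq_iff, Set.mem_Ico]
    norm_num
    grind
  have right : y ∈ Set.Ico (1 / 2) 1 ↔ ⌊2 * y⌋ = 1 := by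
    rw [Int.floor_eq_iff, Set.mem_Ico]
    norm_num
    grind
  simp only [haarMother, Set.indicator_apply, left, right, Pi.one_apply]
  grind

lemma measurable_haarMother : Measurable haarMother :=
  (measurable_one.indicator measurableSet_Ico).sub (measurable_one.indicator measurableSet_Ico)

lemma abs_haarMother_le_one (y : ℝ) : |haarMother y| ≤ 1 := by
  rw [haarMother_eq_ite]
  split_ifs <;> simp

lemma support_haarMother : Function.support haarMother ⊆ Set.Ico 0 1 := by
  intro y hy
  contrapose! hy
  have left : y ∉ Set.Ico 0 (1 / 2) := fun h ↦ hy ⟨h.1, by linarith [h.2]⟩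
  have right : y ∉ Set.Ico (1 / 2) 1 := fun h ↦ hy ⟨by linarith [h.1], h.2⟩
  simp only [Function.mem_support, haarMother, Set.indicator_of_notMem left,
    Set.indicator_of_notMem right, sub_zero, ne_eq, not_true_eq_false, not_false_eq_true]

lemma haarMother_mul_self (y : ℝ) : haarMother y * haarMother y = (Set.Ico 0 1).indicator 1 y := by
  simp only [haarMother, Set.indicator_apply, Set.mem_Ico, Pi.one_apply]
  grind

lemma integral_mul_haarMother {φ : ℝ → ℝ} (hφ : LocallyIntegrable φ) :
    ∫ y, φ y * haarMother y = (∫ y in (0)..(1 / 2), φ y) - ∫ y in (1 / 2)..1, φ y := by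
  have integrableOn (a b : ℝ) : IntegrableOn φ (Set.Ico a b) :=
    (hφ.integrableOn_isCompact isCompact_Icc).mono_set Set.Ico_subset_Icc_self
  have split (y : ℝ) : φ y * haarMother y =
      (Set.Ico 0 (1 / 2)).indicator φ y - (Set.Ico (1 / 2) 1).indicator φ y := by
    simp only [haarMother, Set.indicator_apply, Pi.one_apply, mul_sub, mul_ite, mul_one, mul_zero]
  simp only [split]
  rw [integral_sub ((integrableOn _ _).integrable_indicator measurableSet_Ico)
      ((integrableOn _ _).integrable_indicator measurableSet_Ico),
    integral_indicator measurableSet_Ico, integral_indicator measurableSet_Ico,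
    integral_Ico_eq_integral_Ioc, integral_Ico_eq_integral_Ioc,
    intervalIntegral.integral_of_le (by norm_num), intervalIntegral.integral_of_le (by norm_num)]

lemma integral_haarMother : ∫ y, haarMother y = 0 := by
  have h := integral_mul_haarMother (locallyIntegrable_const (1 : ℝ))
  norm_num at h
  exact h

lemma integral_id_mul_haarMother : ∫ y, y * haarMother y = -(1 / 4) := by
  have h := integral_mul_haarMother (φ := fun y ↦ y) monotone_id.locallyIntegrable
  rw [h, integral_id, integral_id]
  norm_num

/-- The Haar wavelet `2 ^ (j / 2) ψ(2 ^ j x - m)`, where `ψ` is the mother wavelet; it is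
normalised in `L²(ℝ)` and supported on the dyadic interval of level `j` and index `m`. -/
def haarWavelet (j : ℕ) (m : ℤ) (x : ℝ) : ℝ := √2 ^ j * haarMother (2 ^ j * x - m)

lemma haarWavelet_zero_zero : haarWavelet 0 0 = haarMother := by
  ext x
  simp only [haarWavelet, pow_zero, one_mul, Int.cast_zero, sub_zero]

lemma haarWavelet_eq_zero {j : ℕ} {m : ℤ} {x : ℝ} (h : dyadicIndex j x ≠ m) :
    haarWavelet j m x = 0 := by
  have : haarMother (2 ^ j * x - m) = 0 := by
    by_contra hne
    exact h (dyadicIndex_eq_iff.2 (support_haarMother hne))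
  rw [haarWavelet, this, mul_zero]

lemma haarWavelet_congr {j : ℕ} {x y : ℝ} (h : dyadicIndex (j + 1) x = dyadicIndex (j + 1) y)
    (m : ℤ) : haarWavelet j m x = haarWavelet j m y := by
  have floor_eq (z : ℝ) : ⌊2 * (2 ^ j * z - m)⌋ = dyadicIndex (j + 1) z - 2 * m := by
    rw [dyadicIndex, ← Int.floor_sub_intCast]
    push_cast
    ring_nf
  simp only [haarWavelet, haarMother_eq_ite, floor_eq, h]

lemma measurable_haarWavelet (j : ℕ) (m : ℤ) : Measurable (haarWavelet j m) :=
  (measurable_haarMother.comp (by fun_prop)).const_mul _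

lemma abs_haarWavelet_le (j : ℕ) (m : ℤ) (x : ℝ) : |haarWavelet j m x| ≤ √2 ^ j := by
  rw [haarWavelet, abs_mul, abs_of_nonneg (by positivity)]
  exact mul_le_of_le_one_right (by positivity) (abs_haarMother_le_one _)

lemma integrable_mul_haarWavelet {φ : ℝ → ℝ} (hφ : LocallyIntegrable φ) (j : ℕ) (m : ℤ) :
    Integrable fun x ↦ φ x * haarWavelet j m x := by
  have support_subset : Function.support (fun x ↦ φ x * haarWavelet j m x) ⊆
      Set.Icc (m / 2 ^ j) ((m + 1) / 2 ^ j) := by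
    intro x hx
    have hm : dyadicIndex j x = m := by
      by_contra h
      exact hx (by simp only [haarWavelet_eq_zero h, mul_zero])
    obtain ⟨h0, h1⟩ := dyadicIndex_eq_iff.1 hm
    rw [Set.mem_Icc, div_le_iff₀ (by positivity), le_div_iff₀ (by positivity)]
    constructor <;> linarith
  rw [← integrableOn_iff_integrable_of_support_subset support_subset]
  exact (hφ.integrableOn_isCompact isCompact_Icc).mul_bdd
    (measurable_haarWavelet j m).aestronglyMeasurable (.of_forall (abs_haarWavelet_le j m))

lemma integrable_haarWavelet (j : ℕ) (m : ℤ) : Integrable (haarWavelet j m) := by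
  simpa only [one_mul] using integrable_mul_haarWavelet (locallyIntegrable_const 1) j m

lemma integral_comp_two_pow_mul_sub (F : ℝ → ℝ) (j : ℕ) (m : ℤ) :
    ∫ x, F (2 ^ j * x - m) = (∫ y, F y) / 2 ^ j := by
  rw [Measure.integral_comp_mul_left (fun y ↦ F (y - m)), integral_sub_right_eq_self F,
    abs_of_pos (by positivity), smul_eq_mul, inv_mul_eq_div]

lemma integral_haarWavelet (j : ℕ) (m : ℤ) : ∫ x, haarWavelet j m x = 0 := by
  simp only [haarWavelet, integral_const_mul, integral_comp_two_pow_mul_sub,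
    integral_haarMother, zero_div, mul_zero]

lemma integral_id_mul_haarWavelet (j : ℕ) (m : ℤ) :
    ∫ x, x * haarWavelet j m x = -(√2 ^ j / 4 ^ (j + 1)) := by
  have rescale (x : ℝ) : x * haarWavelet j m x = √2 ^ j / 2 ^ j *
      ((2 ^ j * x - m) * haarMother (2 ^ j * x - m) + m * haarMother (2 ^ j * x - m)) := by
    rw [haarWavelet]
    field_simp
    ring
  have integrable_mother : Integrable haarMother :=
    haarWavelet_zero_zero ▸ integrable_haarWavelet 0 0
  have integrable_id_mul : Integrable fun y ↦ y * haarMother y :=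
    haarWavelet_zero_zero ▸ integrable_mul_haarWavelet monotone_id.locallyIntegrable 0 0
  have four_pow : (4 : ℝ) ^ (j + 1) = (2 ^ j) ^ 2 * 4 := by
    rw [pow_succ, pow_right_comm]
    norm_num
  simp only [rescale]
  rw [integral_const_mul,
    integral_comp_two_pow_mul_sub (fun y ↦ y * haarMother y + m * haarMother y),
    integral_add integrable_id_mul (integrable_mother.const_mul _), integral_const_mul,
    integral_haarMother, integral_id_mul_haarMother, four_pow]
  field_simp
  ring

lemma integral_haarWavelet_mul_self (j : ℕ) (m : ℤ) :
    ∫ x, haarWavelet j m x * haarWavelet j m x = 1 := by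
  have sq_wavelet (x : ℝ) : haarWavelet j m x * haarWavelet j m x =
      2 ^ j * (Set.Ico 0 1).indicator 1 (2 ^ j * x - m) := by
    rw [haarWavelet, mul_mul_mul_comm, haarMother_mul_self, ← mul_pow,
      Real.mul_self_sqrt (by norm_num)]
  simp only [sq_wavelet]
  rw [integral_const_mul, integral_comp_two_pow_mul_sub,
    integral_indicator_one measurableSet_Ico, Real.volume_real_Ico]
  field_simp
  norm_num

lemma integral_mul_haarWavelet_eq_zero {φ : ℝ → ℝ} {j : ℕ} {m : ℤ}
    (h : ∀ x y, dyadicIndex j x = m → dyadicIndex j y = m → φ x = φ y) :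
    ∫ x, φ x * haarWavelet j m x = 0 := by
  have left_endpoint : dyadicIndex j (m / 2 ^ j) = m := by
    rw [dyadicIndex, mul_div_cancel₀ _ (by positivity), Int.floor_intCast]
  have const (x : ℝ) : φ x * haarWavelet j m x = φ (m / 2 ^ j) * haarWavelet j m x := by
    by_cases hx : dyadicIndex j x = m
    · rw [h x _ hx left_endpoint]
    · rw [haarWavelet_eq_zero hx, mul_zero, mul_zero]
  simp only [const, integral_const_mul, integral_haarWavelet, mul_zero]

lemma integral_haarWavelet_mul_of_le {i j : ℕ} {k m : ℤ} (hij : i ≤ j) (hne : ¬(i = j ∧ k = m)) :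
    ∫ x, haarWavelet i k x * haarWavelet j m x = 0 := by
  refine integral_mul_haarWavelet_eq_zero fun x y hx hy ↦ ?_
  rcases hij.eq_or_lt with rfl | hlt
  · have hmk : m ≠ k := fun h ↦ hne ⟨rfl, h.symm⟩
    rw [haarWavelet_eq_zero (hx ▸ hmk), haarWavelet_eq_zero (hy ▸ hmk)]
  · refine haarWavelet_congr ?_ k
    rw [dyadicIndex_eq_ediv hlt x, dyadicIndex_eq_ediv hlt y, hx, hy]

lemma integral_haarWavelet_mul_haarWavelet (i j : ℕ) (k m : ℤ) :
    ∫ x, haarWavelet i k x * haarWavelet j m x = if i = j ∧ k = m then 1 else 0 := by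
  split_ifs with h
  · rw [h.1, h.2, integral_haarWavelet_mul_self]
  · rcases le_total i j with hij | hji
    · exact integral_haarWavelet_mul_of_le hij h
    · simp only [mul_comm (haarWavelet i k _)]
      exact integral_haarWavelet_mul_of_le hji fun h' ↦ h ⟨h'.1.symm, h'.2.symm⟩

/-- The tensor product Haar wavelet on the plane, of levels `j.1`, `j.2` and indices `m.1`, `m.2`
in the two coordinates. -/
def haarWavelet₂ (j : ℕ × ℕ) (m : ℤ × ℤ) (x : ℝ × ℝ) : ℝ :=
  haarWavelet j.1 m.1 x.1 * haarWavelet j.2 m.2 x.2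

lemma mul_haarWavelet₂ (u v : ℝ → ℝ) (j : ℕ × ℕ) (m : ℤ × ℤ) (x : ℝ × ℝ) :
    u x.1 * v x.2 * haarWavelet₂ j m x =
      u x.1 * haarWavelet j.1 m.1 x.1 * (v x.2 * haarWavelet j.2 m.2 x.2) :=
  mul_mul_mul_comm _ _ _ _

lemma integral_mul_haarWavelet₂ (u v : ℝ → ℝ) (j : ℕ × ℕ) (m : ℤ × ℤ) :
    ∫ x : ℝ × ℝ, u x.1 * v x.2 * haarWavelet₂ j m x =
      (∫ x, u x * haarWavelet j.1 m.1 x) * ∫ x, v x * haarWavelet j.2 m.2 x := by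
  simp only [mul_haarWavelet₂]
  exact integral_prod_mul (fun x ↦ u x * haarWavelet j.1 m.1 x) fun x ↦ v x * haarWavelet j.2 m.2 x

lemma integrable_mul_haarWavelet₂ {u v : ℝ → ℝ} (hu : LocallyIntegrable u)
    (hv : LocallyIntegrable v) (j : ℕ × ℕ) (m : ℤ × ℤ) :
    Integrable fun x : ℝ × ℝ ↦ u x.1 * v x.2 * haarWavelet₂ j m x := by
  simp only [mul_haarWavelet₂]
  exact (integrable_mul_haarWavelet hu _ _).mul_prod (integrable_mul_haarWavelet hv _ _)

lemma memLp_haarWavelet₂ (j : ℕ × ℕ) (m : ℤ × ℤ) : MemLp (haarWavelet₂ j m) 2 := by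
  have measurable : Measurable (haarWavelet₂ j m) :=
    ((measurable_haarWavelet _ _).comp measurable_fst).mul
      ((measurable_haarWavelet _ _).comp measurable_snd)
  rw [memLp_two_iff_integrable_sq measurable.aestronglyMeasurable]
  simp only [sq]
  exact integrable_mul_haarWavelet₂ (integrable_haarWavelet _ _).locallyIntegrable
    (integrable_haarWavelet _ _).locallyIntegrable j m

lemma integral_haarWavelet₂_mul_haarWavelet₂ (i j : ℕ × ℕ) (k m : ℤ × ℤ) :
    ∫ x, haarWavelet₂ i k x * haarWavelet₂ j m x = if i = j ∧ k = m then 1 else 0 := by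
  refine (integral_mul_haarWavelet₂ _ _ j m).trans ?_
  simp only [integral_haarWavelet_mul_haarWavelet, ite_zero_mul_ite_zero, mul_one, Prod.ext_iff]
  exact if_congr (by tauto) rfl rfl

lemma support_haarWavelet₂_subset_unitSq {j : ℕ × ℕ} {m : ℤ × ℤ}
    (hm : m ∈ Finset.Ico 0 (2 ^ j.1) ×ˢ Finset.Ico 0 (2 ^ j.2)) :
    Function.support (haarWavelet₂ j m) ⊆ unitSq := by
  obtain ⟨hm₁, hm₂⟩ := Finset.mem_product.1 hm
  intro x hx
  obtain ⟨hx₁, hx₂⟩ := mul_ne_zero_iff.1 (Function.mem_support.1 hx)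
  constructor
  · rw [← dyadicIndex_mem_Ico_iff, not_imp_comm.1 haarWavelet_eq_zero hx₁]
    exact hm₁
  · rw [← dyadicIndex_mem_Ico_iff, not_imp_comm.1 haarWavelet_eq_zero hx₂]
    exact hm₂

/-- The indicator of `a ∈ [0, x)` as a function of `x`. The box indicators in the discrepancy
function are products of two of these. -/
def anchoredIndicator (a x : ℝ) : ℝ := if 0 ≤ a ∧ a < x then 1 else 0

lemma monotone_anchoredIndicator (a : ℝ) : Monotone (anchoredIndicator a) := by
  intro x y hxy
  simp only [anchoredIndicator]
  grind

lemma integral_anchoredIndicator_mul_haarWavelet {a : ℝ} {j : ℕ} {m : ℤ}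
    (h : dyadicIndex j a ≠ m) : ∫ x, anchoredIndicator a x * haarWavelet j m x = 0 := by
  have lt_iff {x : ℝ} (hx : dyadicIndex j x = m) : a < x ↔ dyadicIndex j a < m := by
    refine ⟨fun hax ↦ lt_of_le_of_ne (hx ▸ monotone_dyadicIndex j hax.le) h, fun ham ↦ ?_⟩
    exact (monotone_dyadicIndex j).reflect_lt (hx ▸ ham)
  refine integral_mul_haarWavelet_eq_zero fun x y hx hy ↦ ?_
  simp only [anchoredIndicator, lt_iff hx, lt_iff hy]

lemma measurableSet_unitSq : MeasurableSet unitSq := measurableSet_Ico.prod measurableSet_Ico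

lemma volume_unitSq : volume unitSq = 1 := by
  rw [unitSq, Measure.volume_eq_prod, Measure.prod_prod, Real.volume_Ico, sub_zero,
    ENNReal.ofReal_one, one_mul]

section Discrepancy

variable {N : ℕ} (p : Fin N → ℝ × ℝ)

lemma disc_eq_sum_anchoredIndicator (x : ℝ × ℝ) :
    disc N p x =
      (∑ i, anchoredIndicator (p i).1 x.1 * anchoredIndicator (p i).2 x.2) - N * (x.1 * x.2) := by
  simp only [disc, anchoredIndicator, ite_zero_mul_ite_zero, mul_one, and_assoc, mul_assoc]

lemma memLp_disc : MemLp (disc N p) 2 (volume.restrict unitSq) := by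
  have measurable : Measurable (disc N p) := by
    rw [funext (disc_eq_sum_anchoredIndicator p)]
    have h (a : ℝ) := (monotone_anchoredIndicator a).measurable
    fun_prop
  have finite : IsFiniteMeasure (volume.restrict unitSq) :=
    isFiniteMeasure_restrict.2 (volume_unitSq ▸ ENNReal.one_ne_top)
  refine MemLp.of_bound measurable.aestronglyMeasurable N
    (ae_restrict_of_forall_mem measurableSet_unitSq ?_)
  rintro x ⟨⟨hx₁, hx₁'⟩, hx₂, hx₂'⟩
  rw [Real.norm_eq_abs, disc, mul_assoc, Finset.sum_boole]
  refine abs_sub_le_of_nonneg_of_le (by positivity) ?_ (by positivity) ?_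
  · exact_mod_cast (Finset.card_filter_le _ _).trans_eq (Finset.card_fin N)
  · exact mul_le_of_le_one_right (by positivity) (mul_le_one₀ hx₁'.le hx₂ hx₂'.le)

variable {p} in
lemma integral_disc_mul_haarWavelet₂ {j : ℕ × ℕ} {m : ℤ × ℤ}
    (hm : ∀ i, dyadicIndex₂ j (p i) ≠ m) :
    ∫ x, disc N p x * haarWavelet₂ j m x =
      -(N * (√2 ^ (j.1 + j.2) / 4 ^ (j.1 + j.2 + 2))) := by
  have integrable_box (i : Fin N) := integrable_mul_haarWavelet₂
    (monotone_anchoredIndicator (p i).1).locallyIntegrable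
    (monotone_anchoredIndicator (p i).2).locallyIntegrable j m
  have integrable_area := integrable_mul_haarWavelet₂ (u := fun x ↦ x) (v := fun x ↦ x)
    monotone_id.locallyIntegrable monotone_id.locallyIntegrable j m
  have integral_box (i : Fin N) : ∫ x : ℝ × ℝ, anchoredIndicator (p i).1 x.1 *
      anchoredIndicator (p i).2 x.2 * haarWavelet₂ j m x = 0 := by
    rw [integral_mul_haarWavelet₂, mul_eq_zero]
    rcases not_and_or.1 (mt Prod.ext_iff.2 (hm i)) with h | h
    · exact .inl (integral_anchoredIndicator_mul_haarWavelet h)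
    · exact .inr (integral_anchoredIndicator_mul_haarWavelet h)
  have integral_area : ∫ x : ℝ × ℝ, x.1 * x.2 * haarWavelet₂ j m x =
      √2 ^ (j.1 + j.2) / 4 ^ (j.1 + j.2 + 2) := by
    rw [integral_mul_haarWavelet₂ (fun x ↦ x) (fun x ↦ x), integral_id_mul_haarWavelet,
      integral_id_mul_haarWavelet]
    ring
  simp only [disc_eq_sum_anchoredIndicator, sub_mul, Finset.sum_mul, mul_assoc (N : ℝ)]
  rw [integral_sub (integrable_finsetSum _ fun i _ ↦ integrable_box i)
      (integrable_area.const_mul _), integral_finsetSum _ fun i _ ↦ integrable_box i,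
    integral_const_mul, integral_area, Finset.sum_eq_zero fun i _ ↦ integral_box i, zero_sub]

/-- The indices of the dyadic rectangles of levels `j.1`, `j.2` in the unit square that contain
none of the points. -/
def emptyCells (j : ℕ × ℕ) : Finset (ℤ × ℤ) :=
  Finset.Ico 0 (2 ^ j.1) ×ˢ Finset.Ico 0 (2 ^ j.2) \
    Finset.univ.image fun i ↦ dyadicIndex₂ j (p i)

lemma two_pow_sub_le_card_emptyCells (j : ℕ × ℕ) :
    (2 : ℝ) ^ (j.1 + j.2) - N ≤ (emptyCells p j).card := by
  have card_cells :
      (Finset.Ico (0 : ℤ) (2 ^ j.1) ×ˢ Finset.Ico (0 : ℤ) (2 ^ j.2)).card = 2 ^ (j.1 + j.2) := by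
    zify
    simp [pow_add]
  have card_occupied : (Finset.univ.image fun i ↦ dyadicIndex₂ j (p i)).card ≤ N :=
    Finset.card_image_le.trans_eq (Finset.card_fin N)
  have : 2 ^ (j.1 + j.2) ≤ (emptyCells p j).card + N := by
    rw [← card_cells]
    exact Finset.card_le_card_sdiff_add_card.trans (Nat.add_le_add_left card_occupied _)
  rw [sub_le_iff_le_add]
  exact_mod_cast this

lemma l2disc_sq_eq_setIntegral : L2disc N p ^ 2 = ∫ x in unitSq, disc N p x ^ 2 :=
  Real.sq_sqrt (integral_nonneg fun _ ↦ sq_nonneg _)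

variable {p} in
lemma sq_integral_disc_mul_haarWavelet₂ {j : ℕ × ℕ} {m : ℤ × ℤ} (hm : m ∈ emptyCells p j) :
    (∫ x, disc N p x * haarWavelet₂ j m x) ^ 2 =
      2 ^ (j.1 + j.2) * (N ^ 2 / 2 ^ (4 * (j.1 + j.2) + 8)) := by
  have no_point (i : Fin N) : dyadicIndex₂ j (p i) ≠ m := fun h ↦
    (Finset.mem_sdiff.1 hm).2 (Finset.mem_image.2 ⟨i, Finset.mem_univ i, h⟩)
  have sqrt_pow : (√2 ^ (j.1 + j.2)) ^ 2 = (2 : ℝ) ^ (j.1 + j.2) := by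
    rw [pow_right_comm, Real.sq_sqrt (by norm_num)]
  have four_pow : ((4 : ℝ) ^ (j.1 + j.2 + 2)) ^ 2 = 2 ^ (4 * (j.1 + j.2) + 8) := by
    rw [show (4 : ℝ) = 2 ^ 2 by norm_num, ← pow_mul, ← pow_mul]
    ring_nf
  rw [integral_disc_mul_haarWavelet₂ no_point, neg_sq, mul_pow, div_pow, sqrt_pow, four_pow]
  ring

lemma sum_sq_integral_disc_mul_haarWavelet₂_le (J : Finset (ℕ × ℕ)) :
    ∑ j ∈ J, ∑ m ∈ emptyCells p j, (∫ x, disc N p x * haarWavelet₂ j m x) ^ 2 ≤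
      L2disc N p ^ 2 := by
  have orthonormal (t t' : Σ _ : ℕ × ℕ, ℤ × ℤ) :
      ∫ x, haarWavelet₂ t.1 t.2 x * haarWavelet₂ t'.1 t'.2 x = if t = t' then 1 else 0 := by
    rw [integral_haarWavelet₂_mul_haarWavelet₂]
    exact if_congr (by rw [Sigma.ext_iff, heq_iff_eq]) rfl rfl
  have support_subset : ∀ t ∈ J.sigma (emptyCells p),
      Function.support (haarWavelet₂ t.1 t.2) ⊆ unitSq := fun t ht ↦
    support_haarWavelet₂_subset_unitSq (Finset.mem_sdiff.1 (Finset.mem_sigma.1 ht).2).1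
  have bessel := sum_sq_integral_mul_le_setIntegral_sq
    (g := fun t : Σ _ : ℕ × ℕ, ℤ × ℤ ↦ haarWavelet₂ t.1 t.2) measurableSet_unitSq (memLp_disc p)
    (fun t ↦ memLp_haarWavelet₂ t.1 t.2) orthonormal support_subset
  rwa [Finset.sum_sigma, ← l2disc_sq_eq_setIntegral] at bessel

lemma sum_two_pow_mul_le_l2disc_sq (J : Finset (ℕ × ℕ)) :
    ∑ j ∈ J, (2 : ℝ) ^ (j.1 + j.2) * (2 ^ (j.1 + j.2) - N) *
      (N ^ 2 / 2 ^ (4 * (j.1 + j.2) + 8)) ≤ L2disc N p ^ 2 := by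
  refine (Finset.sum_le_sum fun j _ ↦ ?_).trans (sum_sq_integral_disc_mul_haarWavelet₂_le p J)
  rw [Finset.sum_congr rfl fun m hm ↦ sq_integral_disc_mul_haarWavelet₂ hm, Finset.sum_const,
    nsmul_eq_mul, mul_right_comm, mul_comm]
  exact mul_le_mul_of_nonneg_right (two_pow_sub_le_card_emptyCells p j) (by positivity)

open Finset.HasAntidiagonal in
lemma sum_levels_le_l2disc_sq (S : Finset ℕ) :
    ∑ ℓ ∈ S, ((ℓ : ℝ) + 1) * 2 ^ ℓ * (2 ^ ℓ - N) * (N ^ 2 / 2 ^ (4 * ℓ + 8)) ≤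
      L2disc N p ^ 2 := by
  refine Eq.trans_le ?_ (sum_two_pow_mul_le_l2disc_sq p (S.biUnion antidiagonal))
  have disjoint : (S : Set ℕ).PairwiseDisjoint antidiagonal := fun a _ b _ hab ↦
    Finset.disjoint_left.2 fun j hja hjb ↦
      hab ((mem_antidiagonal.1 hja).symm.trans (mem_antidiagonal.1 hjb))
  rw [Finset.sum_biUnion disjoint]
  refine Finset.sum_congr rfl fun ℓ _ ↦ ?_
  rw [Finset.sum_congr rfl fun j hj ↦ by rw [mem_antidiagonal.1 hj], Finset.sum_const,
    Finset.Nat.card_antidiagonal, nsmul_eq_mul]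
  push_cast
  ring

end Discrepancy

lemma two_rpow_eq_sq_div_two_pow {x N : ℝ} (hN : N = 2 ^ x) (ℓ : ℕ) :
    (2 : ℝ) ^ (2 * x - 4 * (ℓ : ℝ) - 8) = N ^ 2 / 2 ^ (4 * ℓ + 8) := by
  rw [hN, ← Real.rpow_mul_natCast (by norm_num), ← Real.rpow_natCast 2 (4 * ℓ + 8),
    ← Real.rpow_sub (by norm_num)]
  congr 1
  push_cast
  ring

theorem l2disc_sq_ge_tail_sum_general (N : ℕ) (p : Fin N → ℝ × ℝ) (L : ℕ) :
    ∑' k : ℕ, (((L + k : ℕ) : ℝ) + 1) * 2 ^ (L + k) * (2 ^ (L + k) - N) *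
      (N ^ 2 / 2 ^ (4 * (L + k) + 8)) ≤ L2disc N p ^ 2 := by
  refine tsum_le_of_sum_le' (sq_nonneg _) fun s ↦ ?_
  simpa only [Finset.sum_map, addLeftEmbedding_apply] using
    sum_levels_le_l2disc_sq p (s.map (addLeftEmbedding L))

/-- If `P ⊂ [0,1)²` has `N = 2^{M+κ}` points with `M ∈ ℕ₀`, `0 ≤ κ < 1`, then
`‖D_P | L₂‖² ≥ Σ_{ℓ=M+1}^∞ (ℓ+1)·2^ℓ·(2^ℓ − 2^{M+κ})·2^{2M+2κ−4ℓ−8}`. -/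
theorem l2disc_sq_ge_tail_sum (M : ℕ) (κ : ℝ) (hκ0 : 0 ≤ κ) (hκ1 : κ < 1)
    (N : ℕ) (p : Fin N → ℝ × ℝ) (hp : ∀ i, p i ∈ unitSq)
    (hN : (N : ℝ) = 2 ^ ((M : ℝ) + κ)) :
    (∑' k : ℕ, (((M + 1 + k : ℕ) : ℝ) + 1) * (2:ℝ) ^ (M + 1 + k) *
        ((2:ℝ) ^ (M + 1 + k) - (2:ℝ) ^ ((M : ℝ) + κ)) *
        (2:ℝ) ^ (2 * (M : ℝ) + 2 * κ - 4 * ((M + 1 + k : ℕ) : ℝ) - 8))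
      ≤ L2disc N p ^ 2 := by
  simpa only [← mul_add, two_rpow_eq_sq_div_two_pow hN, ← hN] using
    l2disc_sq_ge_tail_sum_general N p (M + 1)

end
end
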